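/- arXiv:2311.10262 — 2 statements merged into one kernel-verified Lean document; each statement's English description precedes it below -/
import Mathlib

section
/- The affinity exponent of the Rauzy gasket is at least 3/2; concretely, the series Σ_w σ2(A_w)^{1/2} · σ1(A_w)^{−2}, summed over all nonempty words w with letters in {1,2,3}, diverges (this series equals Σ_w φ_{3/2}(A_w)). -/
open Matrix MeasureTheory

noncomputable section

abbrev M3 := Matrix (Fin 3) (Fin 3) ℝ
abbrev E3 := EuclideanSpace ℝ (Fin 3)

/-- The Rauzy generators. -/
def A : Fin 3 → M3
  | 0 => !![1,1,1; 0,1,0; 0,0,1]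
  | 1 => !![1,0,0; 1,1,1; 0,0,1]
  | 2 => !![1,0,0; 0,1,0; 1,1,1]

/-- Product of the matrices along a word. -/
def Aw (w : List (Fin 3)) : M3 := (w.map A).prod

/-- Euclidean norm of a vector in `ℝ³`. -/
def enorm3 (v : Fin 3 → ℝ) : ℝ := Real.sqrt (v 0 ^ 2 + v 1 ^ 2 + v 2 ^ 2)

/-- Largest singular value = `ℓ²` operator norm. -/
def sval1 (g : M3) : ℝ := ‖(Matrix.toEuclideanLin g).toContinuousLinearMap‖

/-- Smallest singular value (for invertible `g`): `σ₃(g) = σ₁(g⁻¹)⁻¹`. -/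
def sval3 (g : M3) : ℝ := (sval1 g⁻¹)⁻¹

/-- Middle singular value (for invertible `g`): `σ₂ = |det g|·σ₁(g⁻¹)/σ₁(g)`. -/
def sval2 (g : M3) : ℝ := |g.det| * sval1 g⁻¹ / sval1 g

def basis3 (i : Fin 3) : Fin 3 → ℝ := Pi.single i 1

def omega3 (v : Fin 3 → ℝ) : ℝ := v 0 + v 1 + v 2

def ofE : E3 → (Fin 3 → ℝ) := WithLp.equiv 2 (Fin 3 → ℝ)
def toE : (Fin 3 → ℝ) → E3 := (WithLp.equiv 2 (Fin 3 → ℝ)).symm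

/-- The standard 2-simplex in `ℝ³` (with the Euclidean metric). -/
def simplex : Set E3 := {x | (∀ i, 0 ≤ ofE x i) ∧ omega3 (ofE x) = 1}

/-- The projective action of the word `w` on the simplex. -/
def fmap (w : List (Fin 3)) (x : E3) : E3 :=
  toE ((omega3 ((Aw w) *ᵥ ofE x))⁻¹ • ((Aw w) *ᵥ ofE x))

/-- The Rauzy gasket. -/
def gasket : Set E3 :=
  ⋂ n : ℕ, ⋃ w ∈ {w : List (Fin 3) | w.length = n + 1}, fmap w '' simplex

/-- Falconer's singular value function. -/
def phi (s : ℝ) (g : M3) : ℝ :=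
  if s ≤ 1 then (sval2 g / sval1 g) ^ s
  else (sval2 g / sval1 g) * (sval3 g / sval1 g) ^ (s - 1)

/-- The affinity exponent of the Rauzy semigroup. -/
def sA : ℝ :=
  sSup {s : ℝ | s ∈ Set.Ioc (0:ℝ) 2 ∧
    ¬ Summable fun w : {w : List (Fin 3) // w ≠ []} => phi s (Aw w.1)}

/-- A word has its last `k` letters not all the same. -/
def LastNotAllSame (w : List (Fin 3)) (k : ℕ) : Prop :=
  k ≤ w.length ∧ ¬ ∃ c, ∀ x ∈ w.drop (w.length - k), x = c

/-- A word's last two letters are different. -/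
def LastTwoDiff (w : List (Fin 3)) : Prop :=
  ∃ u a b, w = u ++ [a, b] ∧ a ≠ b

/-- The Cartan projection `κ(g) = (log σ₁, log σ₂, log σ₃)`. -/
def kappa (g : M3) : Fin 3 → ℝ :=
  ![Real.log (sval1 g), Real.log (sval2 g), Real.log (sval3 g)]

/-- The linear functional `ψ_s` on the Cartan algebra. -/
def psi (s : ℝ) (lam : Fin 3 → ℝ) : ℝ := (lam 0 - lam 1) + (s - 1) * (lam 0 - lam 2)

end

/-!
Both `A 0` and `A 1` fix the vector `(-1, -1, 1)` and preserve the plane of vectors with vanishing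
last coordinate, on which they act by the two standard unipotent generators of `SL₂(ℕ)`. Hence, for
a word `w` in these two letters, `A_w` is conjugate by a fixed matrix to `B ⊕ 1` with `B ∈ SL₂(ℕ)`.
Up to bounded factors its singular values are `‖B‖, 1, ‖B‖⁻¹`, so the term of the series at `w` is
comparable to `‖B‖⁻²`.

By the subtractive Euclidean algorithm, every pair of coprime positive integers `(p, q)` is the
vector of row sums of such a `B`, and `‖B‖ ≤ p + q`. The series therefore dominates a multiple of
`∑ (p + q)⁻²` over coprime pairs. The pairs whose sum is a given prime `r` are all coprime and
contribute `(r - 1) / r²`, and `∑ 1 / r` over the primes diverges.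
-/

section OperatorNorm

variable {𝕜 m n : Type*} [RCLike 𝕜] [Fintype m] [Fintype n] [DecidableEq n]

lemma norm_entry_le_norm_toEuclideanLin (g : Matrix m n 𝕜) (i : m) (j : n) :
    ‖g i j‖ ≤ ‖(toEuclideanLin g).toContinuousLinearMap‖ := by
  set T := (toEuclideanLin g).toContinuousLinearMap
  have entry : T (EuclideanSpace.single j 1) i = g i j := by
    simp [T, toLpLin_apply]
  calc ‖g i j‖ ≤ ‖T (EuclideanSpace.single j 1)‖ := entry ▸ PiLp.norm_apply_le _ i
    _ ≤ ‖T‖ * ‖EuclideanSpace.single j (1 : 𝕜)‖ := T.le_opNorm _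
    _ = ‖T‖ := by simp

lemma norm_le_sum_norm_apply (x : EuclideanSpace 𝕜 m) : ‖x‖ ≤ ∑ i, ‖x i‖ := by
  rw [EuclideanSpace.norm_eq]
  exact Real.sqrt_le_iff.2 ⟨by positivity,
    Finset.sum_sq_le_sq_sum_of_nonneg fun i _ => norm_nonneg (x i)⟩

lemma norm_toEuclideanLin_le_sum_norm_entry (g : Matrix m n 𝕜) :
    ‖(toEuclideanLin g).toContinuousLinearMap‖ ≤ ∑ i, ∑ j, ‖g i j‖ := by
  refine ContinuousLinearMap.opNorm_le_bound _ (by positivity) fun x => ?_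
  calc ‖toEuclideanLin g x‖ ≤ ∑ i, ‖∑ j, g i j * x j‖ :=
        norm_le_sum_norm_apply (toEuclideanLin g x)
    _ ≤ ∑ i, ∑ j, ‖g i j‖ * ‖x‖ := by
        refine Finset.sum_le_sum fun i _ => norm_sum_le_of_le _ fun j _ => ?_
        rw [norm_mul]
        gcongr
        exact PiLp.norm_apply_le x j
    _ = (∑ i, ∑ j, ‖g i j‖) * ‖x‖ := by simp only [Finset.sum_mul]

end OperatorNorm

section SingularValues

variable {g : M3}

lemma sval1_pos (hg : g ≠ 0) : 0 < sval1 g := by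
  simpa [sval1] using hg

lemma sval1_inv_pos (hg : g.det ≠ 0) : 0 < sval1 g⁻¹ := by
  refine sval1_pos fun h => hg ?_
  simpa [h] using (det_nonsing_inv g).symm

lemma phi_eq_rpow_div_rpow (hg : |g.det| = 1) {s : ℝ} (hs : 1 < s) :
    phi s g = sval2 g ^ (2 - s) / sval1 g ^ (2 * s - 1) := by
  have hdet : g.det ≠ 0 := by
    intro h
    simp [h] at hg
  have hσ₁ : 0 < sval1 g := sval1_pos (by rintro rfl; simp at hdet)
  have hσ₁_inv : 0 < sval1 g⁻¹ := sval1_inv_pos hdet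
  have hσ₂ : 0 < sval2 g := by
    rw [sval2, hg]
    positivity
  have hσ₃ : sval3 g / sval1 g = (sval2 g * sval1 g ^ 2)⁻¹ := by
    rw [sval2, sval3, hg]
    field_simp
  have hσ₁_pow : (sval1 g ^ 2) ^ (s - 1) * sval1 g = sval1 g ^ (2 * s - 1) := by
    rw [← Real.rpow_natCast, ← Real.rpow_mul hσ₁.le, ← Real.rpow_add_one hσ₁.ne']
    congr 1
    push_cast
    ring
  have hσ₂_pow : sval2 g ^ (s - 1) * sval2 g ^ (2 - s) = sval2 g := by
    rw [← Real.rpow_add hσ₂, show s - 1 + (2 - s) = 1 by ring, Real.rpow_one]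
  rw [phi, if_neg hs.not_ge, hσ₃, Real.inv_rpow (by positivity),
    Real.mul_rpow hσ₂.le (by positivity), ← hσ₁_pow]
  have := Real.rpow_pos_of_pos hσ₂ (s - 1)
  field_simp
  exact hσ₂_pow.symm

lemma phi_three_halves (hg : |g.det| = 1) :
    phi (3 / 2) g = √(sval2 g) / sval1 g ^ 2 := by
  rw [phi_eq_rpow_div_rpow hg (by norm_num), Real.sqrt_eq_rpow, ← Real.rpow_natCast]
  norm_num

lemma det_Aw (w : List (Fin 3)) : (Aw w).det = 1 := by
  have det_A : ∀ i, (A i).det = 1 := by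
    intro i
    fin_cases i <;> simp [A, det_fin_three]
  induction w with
  | nil => simp [Aw]
  | cons i w ih => simpa [Aw, det_A] using ih

lemma le_sA_of_not_summable {s : ℝ} (hs : s ∈ Set.Ioc (0 : ℝ) 2)
    (h : ¬ Summable fun w : {w : List (Fin 3) // w ≠ []} => phi s (Aw w.1)) : s ≤ sA :=
  le_csSup ⟨2, fun _ ht => ht.1.2⟩ ⟨hs, h⟩

end SingularValues

/-- The `3 × 3` matrix that fixes `(-1, -1, 1)` and acts as `B` on the plane spanned by the first
two basis vectors. The letters `A 0` and `A 1` both have this shape, so passing to `B` reduces words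
in these letters to products of `2 × 2` matrices. -/
def planeBlock {R : Type*} [Ring R] : Matrix (Fin 2) (Fin 2) R →* Matrix (Fin 3) (Fin 3) R where
  toFun B := !![B 0 0, B 0 1, B 0 0 + B 0 1 - 1; B 1 0, B 1 1, B 1 0 + B 1 1 - 1; 0, 0, 1]
  map_one' := by
    ext i j
    fin_cases i <;> fin_cases j <;> simp
  map_mul' B C := by
    ext i j
    fin_cases i <;> fin_cases j <;>
      simp [mul_apply, Fin.sum_univ_succ, mul_add, mul_sub] <;> abel

section PlaneBlock

lemma planeBlock_inv {R : Type*} [CommRing R] {B : Matrix (Fin 2) (Fin 2) R} (hB : B.det = 1) :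
    (planeBlock B)⁻¹ = planeBlock B.adjugate :=
  inv_eq_right_inv (by rw [← map_mul, mul_adjugate, hB, one_smul, map_one])

lemma det_planeBlock {R : Type*} [CommRing R] (B : Matrix (Fin 2) (Fin 2) R) :
    (planeBlock B).det = B.det := by
  simp [planeBlock, det_fin_three, det_fin_two]

open scoped Matrix.Norms.Elementwise

variable {B : Matrix (Fin 2) (Fin 2) ℝ}

lemma norm_adjugate_fin_two {R : Type*} [SeminormedCommRing R] (B : Matrix (Fin 2) (Fin 2) R) :
    ‖B.adjugate‖ = ‖B‖ := by
  have hsup (M : Matrix (Fin 2) (Fin 2) R) :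
      ‖M‖₊ = (‖M 0 0‖₊ ⊔ ‖M 0 1‖₊) ⊔ (‖M 1 0‖₊ ⊔ ‖M 1 1‖₊) := by
    simp [nnnorm_def, Pi.nnnorm_def, Fin.univ_succ]
  rw [← coe_nnnorm, ← coe_nnnorm, hsup, hsup, adjugate_fin_two]
  simp [max_assoc, max_comm, max_left_comm]

lemma one_le_two_mul_norm_of_det_eq_one (hB : B.det = 1) : 1 ≤ 2 * ‖B‖ := by
  have entry_le (i j) : |B i j| ≤ ‖B‖ := norm_entry_le_entrywise_sup_norm B
  have : 1 ≤ ‖B‖ * ‖B‖ + ‖B‖ * ‖B‖ :=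
    calc 1 = |B 0 0 * B 1 1 - B 0 1 * B 1 0| := by rw [← det_fin_two, hB, abs_one]
      _ ≤ |B 0 0| * |B 1 1| + |B 0 1| * |B 1 0| := by
        simpa only [abs_mul] using abs_sub (B 0 0 * B 1 1) (B 0 1 * B 1 0)
      _ ≤ ‖B‖ * ‖B‖ + ‖B‖ * ‖B‖ := by gcongr <;> exact entry_le _ _
  nlinarith [norm_nonneg B]

lemma norm_le_sval1_planeBlock (B : Matrix (Fin 2) (Fin 2) ℝ) : ‖B‖ ≤ sval1 (planeBlock B) := by
  refine (norm_le_iff (norm_nonneg _)).2 fun i j => ?_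
  have entry : planeBlock B i.castSucc j.castSucc = B i j := by
    fin_cases i <;> fin_cases j <;> rfl
  exact entry ▸ norm_entry_le_norm_toEuclideanLin (planeBlock B) _ _

lemma norm_planeBlock_le (B : Matrix (Fin 2) (Fin 2) ℝ) : ‖planeBlock B‖ ≤ 2 * ‖B‖ + 1 := by
  have bound_nonneg : 0 ≤ 2 * ‖B‖ + 1 := by positivity
  have entry_le (i j) : |B i j| ≤ ‖B‖ := norm_entry_le_entrywise_sup_norm B
  have last_le (i) : |B i 0 + B i 1 - 1| ≤ 2 * ‖B‖ + 1 := by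
    have := abs_le.1 (entry_le i 0)
    have := abs_le.1 (entry_le i 1)
    exact abs_le.2 ⟨by linarith, by linarith⟩
  have block_le (i j) : |B i j| ≤ 2 * ‖B‖ + 1 := by linarith [entry_le i j, abs_nonneg (B i j)]
  refine (norm_le_iff bound_nonneg).2 fun i j => ?_
  fin_cases i <;> fin_cases j <;> simp [planeBlock, last_le, block_le, bound_nonneg]

lemma sval1_le_nine_mul_norm (g : M3) : sval1 g ≤ 9 * ‖g‖ :=
  calc sval1 g ≤ ∑ i, ∑ j, ‖g i j‖ := norm_toEuclideanLin_le_sum_norm_entry g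
    _ ≤ ∑ _i : Fin 3, ∑ _j : Fin 3, ‖g‖ := by
        gcongr
        exact norm_entry_le_entrywise_sup_norm g
    _ = 9 * ‖g‖ := by
        simp only [Finset.sum_const, Finset.card_univ, Fintype.card_fin]
        ring

lemma sval1_planeBlock_le (hB : B.det = 1) : sval1 (planeBlock B) ≤ 36 * ‖B‖ := by
  linarith [sval1_le_nine_mul_norm (planeBlock B), norm_planeBlock_le B,
    one_le_two_mul_norm_of_det_eq_one hB]

lemma le_sval2_planeBlock (hB : B.det = 1) : 1 / 36 ≤ sval2 (planeBlock B) := by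
  have hpos : 0 < sval1 (planeBlock B) := by
    linarith [one_le_two_mul_norm_of_det_eq_one hB, norm_le_sval1_planeBlock B]
  rw [sval2, det_planeBlock, hB, abs_one, one_mul, planeBlock_inv hB, le_div_iff₀ hpos]
  linarith [sval1_planeBlock_le hB, norm_le_sval1_planeBlock B.adjugate, norm_adjugate_fin_two B]

lemma le_sqrt_sval2_div_sval1_sq_planeBlock (hB : B.det = 1) :
    1 / 7776 * (1 / ‖B‖ ^ 2) ≤ √(sval2 (planeBlock B)) / sval1 (planeBlock B) ^ 2 := by
  have hpos : 0 < ‖B‖ := by linarith [one_le_two_mul_norm_of_det_eq_one hB]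
  have hσ₁ : 0 < sval1 (planeBlock B) := hpos.trans_le (norm_le_sval1_planeBlock B)
  have hσ₂ : 1 / 6 ≤ √(sval2 (planeBlock B)) :=
    Real.le_sqrt_of_sq_le (by linarith [le_sval2_planeBlock hB])
  calc 1 / 7776 * (1 / ‖B‖ ^ 2) = 1 / 6 / (36 * ‖B‖) ^ 2 := by
        field_simp
        norm_num
    _ ≤ √(sval2 (planeBlock B)) / sval1 (planeBlock B) ^ 2 := by
        gcongr
        exact sval1_planeBlock_le hB

end PlaneBlock

/-- The two standard unipotent generators of `SL₂(ℕ)`; on positive column vectors they undo the two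
kinds of steps of the subtractive Euclidean algorithm. Entries are natural numbers, so that
nonnegativity is automatic; determinants are taken after casting. -/
def euclidGen : Fin 2 → Matrix (Fin 2) (Fin 2) ℕ
  | 0 => !![1, 1; 0, 1]
  | 1 => !![1, 0; 1, 1]

/-- Product of the Euclidean generators along a word, the `2 × 2` counterpart of `Aw`. -/
def euclidProd (u : List (Fin 2)) : Matrix (Fin 2) (Fin 2) ℕ := (u.map euclidGen).prod

section Euclid

lemma euclidProd_cons (i : Fin 2) (u : List (Fin 2)) :
    euclidProd (i :: u) = euclidGen i * euclidProd u := by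
  simp [euclidProd]

lemma det_mapMatrix_euclidProd {R : Type*} [CommRing R] (u : List (Fin 2)) :
    ((Nat.castRingHom R).mapMatrix (euclidProd u)).det = 1 := by
  have det_euclidGen : ∀ i, ((Nat.castRingHom R).mapMatrix (euclidGen i)).det = 1 := by
    intro i
    fin_cases i <;> simp [euclidGen, det_fin_two]
  induction u with
  | nil => simp [euclidProd]
  | cons i u ih => rw [euclidProd_cons, map_mul, det_mul, det_euclidGen, ih, one_mul]

lemma exists_euclidProd_mulVec_one {p q : ℕ} (hp : 0 < p) (hq : 0 < q) (hpq : p.Coprime q) :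
    ∃ u, euclidProd u *ᵥ 1 = ![p, q] := by
  rcases lt_trichotomy p q with h | rfl | h
  · obtain ⟨u, hu⟩ := exists_euclidProd_mulVec_one hp (Nat.sub_pos_of_lt h)
      ((Nat.coprime_sub_self_right h.le).2 hpq)
    refine ⟨1 :: u, ?_⟩
    rw [euclidProd_cons, ← mulVec_mulVec, hu]
    ext i
    fin_cases i <;> simp [euclidGen, mulVec, h.le]
  · obtain rfl : p = 1 := by simpa using hpq
    exact ⟨[], by ext i; fin_cases i <;> simp [euclidProd]⟩
  · obtain ⟨u, hu⟩ := exists_euclidProd_mulVec_one (Nat.sub_pos_of_lt h) hq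
      ((Nat.coprime_sub_self_left h.le).2 hpq)
    refine ⟨0 :: u, ?_⟩
    rw [euclidProd_cons, ← mulVec_mulVec, hu]
    ext i
    fin_cases i <;> simp [euclidGen, mulVec, h.le]
termination_by p + q

lemma Aw_map_castSucc (u : List (Fin 2)) :
    Aw (u.map Fin.castSucc) = planeBlock ((Nat.castRingHom ℝ).mapMatrix (euclidProd u)) := by
  have A_castSucc (i : Fin 2) :
      A i.castSucc = planeBlock ((Nat.castRingHom ℝ).mapMatrix (euclidGen i)) := by
    ext j k
    fin_cases i <;> fin_cases j <;> fin_cases k <;> simp [A, planeBlock, euclidGen]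
  simp only [Aw, euclidProd, map_list_prod, List.map_map, Function.comp_def, A_castSucc]

open scoped Matrix.Norms.Elementwise

lemma norm_mapMatrix_natCast_le_sum_mulVec_one {n : Type*} [Fintype n] [DecidableEq n]
    (M : Matrix n n ℕ) : ‖(Nat.castRingHom ℝ).mapMatrix M‖ ≤ ∑ i, ((M *ᵥ 1) i : ℝ) := by
  refine (norm_le_iff (by positivity)).2 fun i j => ?_
  have entry_le : M i j ≤ ∑ i, (M *ᵥ 1) i :=
    calc M i j ≤ ∑ j, M i j := Finset.single_le_sum_of_canonicallyOrdered (Finset.mem_univ j)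
      _ = (M *ᵥ 1) i := by simp [mulVec, dotProduct]
      _ ≤ ∑ i, (M *ᵥ 1) i := Finset.single_le_sum_of_canonicallyOrdered (Finset.mem_univ i)
  simpa using mod_cast entry_le

lemma le_sqrt_sval2_div_sval1_sq_Aw_of_euclidProd {u : List (Fin 2)} {p q : ℕ}
    (hu : euclidProd u *ᵥ 1 = ![p, q]) :
    1 / 7776 * (1 / ((p : ℝ) + q) ^ 2) ≤
      √(sval2 (Aw (u.map Fin.castSucc))) / sval1 (Aw (u.map Fin.castSucc)) ^ 2 := by
  have hdet := det_mapMatrix_euclidProd (R := ℝ) u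
  have hnorm := norm_mapMatrix_natCast_le_sum_mulVec_one (euclidProd u)
  simp only [hu, Fin.sum_univ_two, cons_val_zero, cons_val_one] at hnorm
  have hpos : 0 < ‖(Nat.castRingHom ℝ).mapMatrix (euclidProd u)‖ := by
    linarith [one_le_two_mul_norm_of_det_eq_one hdet]
  rw [Aw_map_castSucc]
  refine le_trans ?_ (le_sqrt_sval2_div_sval1_sq_planeBlock hdet)
  gcongr

end Euclid

section Divergence

lemma not_summable_one_div_add_sq_of_coprime :
    ¬ Summable fun x : {x : ℕ × ℕ // 0 < x.1 ∧ 0 < x.2 ∧ x.1.Coprime x.2} =>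
      1 / ((x.1.1 : ℝ) + x.1.2) ^ 2 := by
  intro h
  let split (x : Σ r : Nat.Primes, Fin (r - 1)) :
      {x : ℕ × ℕ // 0 < x.1 ∧ 0 < x.2 ∧ x.1.Coprime x.2} :=
    ⟨(x.2 + 1, x.1 - (x.2 + 1)), by omega, by omega,
      (Nat.coprime_sub_self_right (by omega)).2
        (Nat.coprime_of_lt_prime (by omega) (by omega) x.1.2).symm⟩
  have split_injective : Function.Injective split := by
    rintro ⟨⟨r, hr⟩, i⟩ ⟨⟨s, hs⟩, j⟩ hrs
    simp only [split, Subtype.mk.injEq, Prod.mk.injEq] at hrs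
    obtain rfl : r = s := by omega
    obtain rfl : i = j := Fin.ext (by omega)
    rfl
  have split_add (x) : ((split x).1.1 : ℝ) + (split x).1.2 = x.1 :=
    mod_cast Nat.add_sub_of_le (show x.2 + 1 ≤ (x.1 : ℕ) by omega)
  have h_split : Summable fun x : Σ r : Nat.Primes, Fin (r - 1) => 1 / (x.1 : ℝ) ^ 2 := by
    simpa only [Function.comp_def, split_add] using h.comp_injective split_injective
  have h_fibers := ((summable_sigma_of_nonneg fun _ => by positivity).1 h_split).2
  refine Nat.Primes.not_summable_one_div
    ((h_fibers.mul_left 2).of_nonneg_of_le (fun r => by positivity) fun r => ?_)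
  have hr : (2 : ℝ) ≤ r := mod_cast r.2.two_le
  simp only [tsum_fintype, Finset.sum_const, Finset.card_univ, Fintype.card_fin, nsmul_eq_mul,
    Nat.cast_pred r.2.pos]
  field_simp
  linarith

lemma not_summable_Aw_map_castSucc :
    ¬ Summable fun u : List (Fin 2) =>
      √(sval2 (Aw (u.map Fin.castSucc))) / sval1 (Aw (u.map Fin.castSucc)) ^ 2 := by
  intro h
  choose word hword using
    fun x : {x : ℕ × ℕ // 0 < x.1 ∧ 0 < x.2 ∧ x.1.Coprime x.2} =>
      exists_euclidProd_mulVec_one x.2.1 x.2.2.1 x.2.2.2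
  have word_injective : Function.Injective word := by
    intro x y hxy
    have := (hword x).symm.trans (hxy ▸ hword y)
    exact Subtype.ext (Prod.ext (congrFun this 0) (congrFun this 1))
  have h_words := h.comp_injective word_injective
  exact not_summable_one_div_add_sq_of_coprime <|
    (summable_mul_left_iff (by norm_num)).1 <| h_words.of_nonneg_of_le (fun x => by positivity)
      fun x => le_sqrt_sval2_div_sval1_sq_Aw_of_euclidProd (hword x)

lemma not_summable_Aw :
    ¬ Summable fun w : {w : List (Fin 3) // w ≠ []} => √(sval2 (Aw w.1)) / sval1 (Aw w.1) ^ 2 := by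
  intro h
  have h_all : Summable fun w : List (Fin 3) => √(sval2 (Aw w)) / sval1 (Aw w) ^ 2 :=
    (Set.finite_singleton []).summable_compl_iff.1 h
  exact not_summable_Aw_map_castSucc
    (h_all.comp_injective (List.map_injective_iff.2 (Fin.castSucc_injective 2)))

end Divergence

/-- The affinity exponent of the Rauzy gasket is at least 3/2: concretely, the series
`Σ_w σ₂(A_w)^{1/2} σ₁(A_w)⁻²` over nonempty words diverges (it equals `Σ_w φ_{3/2}(A_w)`). -/
theorem rauzy_affinity_exponent_ge_three_halves :
    (3 / 2 : ℝ) ≤ sA ∧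
    ¬ Summable (fun w : {w : List (Fin 3) // w ≠ []} =>
        Real.sqrt (sval2 (Aw w.1)) / sval1 (Aw w.1) ^ 2) := by
  refine ⟨le_sA_of_not_summable (by norm_num) ?_, not_summable_Aw⟩
  have hphi (w : List (Fin 3)) := phi_three_halves (g := Aw w) (by rw [det_Aw, abs_one])
  simpa only [hphi] using not_summable_Aw
end

section
/- For every integer n ≥ 2 there exists ε_n > 0 such that for every word w with letters in {1,2,3} whose last n letters are not all the same, and for each i ∈ {1,2,3}, one has ‖A_w e_i‖ ≥ ε_n · σ1(A_w), where e_1,e_2,e_3 is the standard basis of ℝ³ and ‖·‖ is the Euclidean norm. -/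
/-!
Let `s = 1 ᵥ* A_w` be the vector of column sums of `A_w`. Appending a letter `b` to `w` adds the
entry `s b` to every other entry of `s`. Such a shear preserves nonnegativity and the inequalities
`s i ≤ s j + s k` for `j ≠ k`, and it makes `s b` the smallest entry. Fix `j`. After a letter
`c ≠ j` we have `s i ≤ s c + s j ≤ 2 s j`, and each further letter `j` fixes `s j` while adding it
to `s i`; so `s i ≤ (n + 1) s j` as soon as one of the last `n` letters differs from `j`. Finally
`s j` is comparable to `‖A_w e_j‖`, because `A_w` has nonnegative entries, and `σ₁(A_w)` is at most
the sum of the `‖A_w e_j‖`.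
-/

open Matrix MeasureTheory

section Shear

variable {ι M : Type*} [AddCommMonoid M]

/-- A nonnegative family satisfying the weak triangle inequalities: each entry is at most the sum
of any two entries with distinct indices. This is the invariant of shears from which the
comparability of the entries is derived. -/
structure IsTriangleFamily [Preorder M] (s : ι → M) : Prop where
  nonneg : 0 ≤ s
  le_add : ∀ i {j k}, j ≠ k → s i ≤ s j + s k

lemma isTriangleFamily_const [Preorder M] [IsOrderedAddMonoid M] {c : M} (hc : 0 ≤ c) :
    IsTriangleFamily fun _ : ι ↦ c where
  nonneg _ := hc
  le_add _ _ _ _ := le_add_of_nonneg_left hc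

variable [DecidableEq ι]

/-- The shear in direction `b`: it adds the entry `s b` to all other entries of the family `s`.
On row vectors this is right multiplication by the Rauzy generator `A b`; the family comes first,
so that a word acts by `List.foldl shear`. -/
def shear (s : ι → M) (b : ι) : ι → M := fun k ↦ if k = b then s b else s k + s b

lemma shear_self (s : ι → M) (b : ι) : shear s b b = s b := if_pos rfl

lemma shear_of_ne (s : ι → M) {b k : ι} (h : k ≠ b) : shear s b k = s k + s b := if_neg h

variable [Preorder M] [IsOrderedAddMonoid M] {s : ι → M}

lemma shear_le_add (hs : 0 ≤ s) (b k : ι) : shear s b k ≤ s k + s b := by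
  by_cases h : k = b
  · rw [h, shear_self]
    exact le_add_of_nonneg_left (hs b)
  · rw [shear_of_ne s h]

lemma shear_self_le (hs : 0 ≤ s) (b k : ι) : shear s b b ≤ shear s b k := by
  by_cases h : k = b
  · rw [h]
  · rw [shear_self, shear_of_ne s h]
    exact le_add_of_nonneg_left (hs k)

lemma shear_nonneg (hs : 0 ≤ s) (b : ι) : 0 ≤ shear s b := fun k ↦
  (hs b).trans <| (shear_self s b).ge.trans <| shear_self_le hs b k

lemma foldl_shear_nonneg (hs : 0 ≤ s) (w : List ι) : 0 ≤ w.foldl shear s := by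
  induction w generalizing s with
  | nil => exact hs
  | cons b _ ih => exact ih (shear_nonneg hs b)

lemma isTriangleFamily_shear (hs : IsTriangleFamily s) (b : ι) :
    IsTriangleFamily (shear s b) where
  nonneg := shear_nonneg hs.nonneg b
  le_add := by
    have of_eq : ∀ i {k}, k ≠ b → shear s b i ≤ shear s b b + shear s b k := fun i k hk ↦ calc
      shear s b i ≤ s i + s b := shear_le_add hs.nonneg b i
      _ ≤ (s k + s b) + s b := by gcongr; exact hs.le_add i hk
      _ = shear s b b + shear s b k := by rw [shear_self, shear_of_ne s hk, add_comm]
    intro i j k hjk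
    by_cases hj : j = b
    · subst hj
      exact of_eq i hjk.symm
    by_cases hk : k = b
    · subst hk
      rw [add_comm]
      exact of_eq i hj
    calc shear s b i ≤ s i + s b := shear_le_add hs.nonneg b i
      _ ≤ (s j + s k) + s b := by gcongr; exact hs.le_add i hjk
      _ ≤ (s j + s k) + (s b + s b) := by
        gcongr; exact le_add_of_nonneg_left (hs.nonneg b)
      _ = shear s b j + shear s b k := by
        rw [shear_of_ne s hj, shear_of_ne s hk, add_add_add_comm]

lemma isTriangleFamily_foldl_shear (hs : IsTriangleFamily s) (w : List ι) :
    IsTriangleFamily (w.foldl shear s) := by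
  induction w generalizing s with
  | nil => exact hs
  | cons b _ ih => exact ih (isTriangleFamily_shear hs b)

lemma foldl_shear_le_nsmul (hs : IsTriangleFamily s) {t : List ι} {j : ι} (ht : ∃ c ∈ t, c ≠ j)
    (i : ι) : t.foldl shear s i ≤ (t.length + 1) • t.foldl shear s j := by
  induction t using List.reverseRecOn generalizing i with
  | nil => simp at ht
  | append_singleton t b ih =>
    have hr : IsTriangleFamily (t.foldl shear s) := isTriangleFamily_foldl_shear hs t
    rw [List.foldl_concat, List.length_append, List.length_singleton]
    set r := t.foldl shear s
    by_cases hb : b = j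
    · subst hb
      have ht' : ∃ c ∈ t, c ≠ b := by simpa using ht
      calc shear r b i ≤ r i + r b := shear_le_add hr.nonneg b i
        _ ≤ (t.length + 1) • r b + r b := by gcongr; exact ih ht' i
        _ = (t.length + 1 + 1) • shear r b b := by rw [shear_self, succ_nsmul _ (t.length + 1)]
    · have hr' : IsTriangleFamily (shear r b) := isTriangleFamily_shear hr b
      calc shear r b i ≤ shear r b b + shear r b j := hr'.le_add i hb
        _ ≤ shear r b j + shear r b j := by gcongr; exact shear_self_le hr.nonneg b j
        _ = 2 • shear r b j := (two_nsmul _).symm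
        _ ≤ (t.length + 1 + 1) • shear r b j :=
          nsmul_le_nsmul_left (hr'.nonneg j) (by lia)

end Shear

section EuclideanNorm

open WithLp

variable {ι : Type*} [Fintype ι]

lemma norm_toLp_le_sum {v : ι → ℝ} (hv : 0 ≤ v) : ‖toLp 2 v‖ ≤ ∑ i, v i := by
  rw [EuclideanSpace.norm_eq]
  refine Real.sqrt_le_iff.2 ⟨Finset.sum_nonneg fun i _ ↦ hv i, ?_⟩
  simpa only [Real.norm_eq_abs, sq_abs] using
    Finset.sum_sq_le_sq_sum_of_nonneg fun i (_ : i ∈ Finset.univ) ↦ hv i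

lemma sum_le_sqrt_card_mul_norm_toLp (v : ι → ℝ) :
    ∑ i, v i ≤ √(Fintype.card ι) * ‖toLp 2 v‖ := by
  rw [EuclideanSpace.norm_eq, ← Real.sqrt_mul (Nat.cast_nonneg _)]
  refine Real.le_sqrt_of_sq_le ?_
  simpa only [Real.norm_eq_abs, sq_abs, Finset.card_univ] using
    sq_sum_le_card_mul_sum_sq (s := Finset.univ) (f := v)

lemma opNorm_le_sum_norm_orthonormalBasis {𝕜 E F : Type*} [RCLike 𝕜] [NormedAddCommGroup E]
    [InnerProductSpace 𝕜 E] [SeminormedAddCommGroup F] [NormedSpace 𝕜 F]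
    (e : OrthonormalBasis ι 𝕜 E) (f : E →L[𝕜] F) : ‖f‖ ≤ ∑ i, ‖f (e i)‖ := by
  refine f.opNorm_le_bound (by positivity) fun x ↦ ?_
  calc ‖f x‖ = ‖∑ i, inner 𝕜 (e i) x • f (e i)‖ := by
        conv_lhs => rw [← e.sum_repr' x, map_sum]
        simp only [map_smul]
    _ ≤ ∑ i, ‖inner 𝕜 (e i) x‖ * ‖f (e i)‖ := norm_sum_le_of_le _ fun i _ ↦ norm_smul_le _ _
    _ ≤ ∑ i, ‖x‖ * ‖f (e i)‖ := by
        gcongr with i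
        simpa only [e.norm_eq_one, one_mul] using norm_inner_le_norm (𝕜 := 𝕜) (e i) x
    _ = (∑ i, ‖f (e i)‖) * ‖x‖ := by rw [← Finset.mul_sum, mul_comm]

lemma enorm3_eq_norm (v : Fin 3 → ℝ) : enorm3 v = ‖toLp 2 v‖ := by
  simp only [enorm3, EuclideanSpace.norm_eq, Fin.sum_univ_three, Real.norm_eq_abs, sq_abs]

lemma sval1_le_sum_enorm3 (g : M3) : sval1 g ≤ ∑ j, enorm3 (g *ᵥ basis3 j) := by
  simpa only [sval1, enorm3_eq_norm, basis3, EuclideanSpace.basisFun_apply,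
    LinearMap.coe_toContinuousLinearMap', toLpLin_apply, PiLp.ofLp_single] using
    opNorm_le_sum_norm_orthonormalBasis (EuclideanSpace.basisFun (Fin 3) ℝ)
      (toEuclideanLin g).toContinuousLinearMap

lemma one_vecMul_eq_sum_mulVec_basis3 (g : M3) (j : Fin 3) :
    (1 ᵥ* g) j = ∑ i, (g *ᵥ basis3 j) i := by
  simp only [vecMul, one_dotProduct, basis3, mulVec_single_one, col_apply]

lemma enorm3_mulVec_basis3_le {g : M3} (hg : ∀ i j, 0 ≤ g i j) (j : Fin 3) :
    enorm3 (g *ᵥ basis3 j) ≤ (1 ᵥ* g) j := by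
  rw [enorm3_eq_norm, one_vecMul_eq_sum_mulVec_basis3]
  refine norm_toLp_le_sum fun i ↦ ?_
  simpa only [basis3, mulVec_single_one, col_apply, Pi.zero_apply] using hg i j

lemma one_vecMul_le_sqrt_three_mul_enorm3 (g : M3) (j : Fin 3) :
    (1 ᵥ* g) j ≤ √3 * enorm3 (g *ᵥ basis3 j) := by
  rw [enorm3_eq_norm, one_vecMul_eq_sum_mulVec_basis3]
  simpa only [Fintype.card_fin, Nat.cast_ofNat] using
    sum_le_sqrt_card_mul_norm_toLp (g *ᵥ basis3 j)

end EuclideanNorm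

section RauzyProducts

lemma vecMul_A (v : Fin 3 → ℝ) (b : Fin 3) : v ᵥ* A b = shear v b := by
  ext k
  fin_cases b <;> fin_cases k <;>
    simp [A, shear, vecMul, dotProduct, Fin.sum_univ_three] <;> ring

lemma vecMul_Aw (v : Fin 3 → ℝ) (w : List (Fin 3)) : v ᵥ* Aw w = w.foldl shear v := by
  induction w generalizing v with
  | nil => simp only [Aw, List.map_nil, List.prod_nil, vecMul_one, List.foldl_nil]
  | cons b w ih =>
    rw [List.foldl_cons, ← vecMul_A, ← ih, vecMul_vecMul, Aw, Aw, List.map_cons, List.prod_cons]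

lemma Aw_nonneg (w : List (Fin 3)) (i j : Fin 3) : 0 ≤ Aw w i j := by
  have hrow : Aw w i = w.foldl shear (Pi.single i 1) := by
    rw [← vecMul_Aw, single_one_vecMul, row]
  rw [hrow]
  exact foldl_shear_nonneg (Pi.single_nonneg.2 (zero_le_one (α := ℝ))) w j

lemma one_vecMul_Aw_le {n : ℕ} {w : List (Fin 3)} {j : Fin 3} (hw : ∃ c ∈ w.rtake n, c ≠ j)
    (i : Fin 3) : (1 ᵥ* Aw w) i ≤ (n + 1) * (1 ᵥ* Aw w) j := by
  set p := w.take (w.length - n)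
  have hp : IsTriangleFamily (p.foldl shear (1 : Fin 3 → ℝ)) :=
    isTriangleFamily_foldl_shear (isTriangleFamily_const zero_le_one) p
  have hfold : 1 ᵥ* Aw w = (w.rtake n).foldl shear (p.foldl shear 1) := by
    rw [vecMul_Aw, ← List.foldl_append, List.rtake, List.take_append_drop]
  have hlen : (w.rtake n).length ≤ n := by
    rw [List.rtake, List.length_drop]
    lia
  have hnonneg : 0 ≤ (1 ᵥ* Aw w) j := by
    rw [vecMul_Aw]
    exact foldl_shear_nonneg (zero_le_one (α := Fin 3 → ℝ)) w j
  calc (1 ᵥ* Aw w) i ≤ ((w.rtake n).length + 1) • (1 ᵥ* Aw w) j := by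
        rw [hfold]
        exact foldl_shear_le_nsmul hp hw i
    _ ≤ (n + 1) • (1 ᵥ* Aw w) j := by gcongr
    _ = (n + 1) * (1 ᵥ* Aw w) j := by rw [nsmul_eq_mul, Nat.cast_add_one]

end RauzyProducts

theorem norm_image_basis_ge_general (n : ℕ) :
    ∃ ε > (0 : ℝ), ∀ (w : List (Fin 3)) (i : Fin 3), (∃ c ∈ w.rtake n, c ≠ i) →
      ε * sval1 (Aw w) ≤ enorm3 (Aw w *ᵥ basis3 i) := by
  refine ⟨(3 * (n + 1) * √3)⁻¹, by positivity, fun w i hw ↦ ?_⟩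
  rw [inv_mul_le_iff₀ (by positivity)]
  calc sval1 (Aw w) ≤ ∑ k, enorm3 (Aw w *ᵥ basis3 k) := sval1_le_sum_enorm3 _
    _ ≤ ∑ k, (1 ᵥ* Aw w) k :=
      Finset.sum_le_sum fun k _ ↦ enorm3_mulVec_basis3_le (Aw_nonneg w) k
    _ ≤ ∑ _k : Fin 3, (n + 1) * (1 ᵥ* Aw w) i :=
      Finset.sum_le_sum fun k _ ↦ one_vecMul_Aw_le hw k
    _ = 3 * (n + 1) * (1 ᵥ* Aw w) i := by
      rw [Fin.sum_const, nsmul_eq_mul, Nat.cast_ofNat, mul_assoc]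
    _ ≤ 3 * (n + 1) * (√3 * enorm3 (Aw w *ᵥ basis3 i)) := by
      gcongr
      exact one_vecMul_le_sqrt_three_mul_enorm3 _ i
    _ = 3 * (n + 1) * √3 * enorm3 (Aw w *ᵥ basis3 i) := (mul_assoc _ _ _).symm

/-- For every `n ≥ 2` there is `ε > 0` so that for any word whose last `n` letters
are not all the same, `‖A_w e_i‖ ≥ ε σ₁(A_w)` for each standard basis vector `e_i`. -/
theorem norm_image_basis_ge (n : ℕ) (hn : 2 ≤ n) :
    ∃ ε > (0:ℝ), ∀ w : List (Fin 3), LastNotAllSame w n →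
      ∀ i : Fin 3, ε * sval1 (Aw w) ≤ enorm3 (Aw w *ᵥ basis3 i) := by
  obtain ⟨ε, hε, h⟩ := norm_image_basis_ge_general n
  exact ⟨ε, hε, fun w hw i ↦ h w i (by simpa [List.rtake] using not_exists.1 hw.2 i)⟩
end
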